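/- Let (U,s,h) be a finite SL-structure satisfying the septraction M₁ −⊛ M₂ with witness h' (disjoint from h, (U,s,h') ⊨ M₁, (U,s,h⊎h') ⊨ M₂). Let Y be a finite set of variables none of which is allocated in h (s(y) ∉ dom(h) for all y ∈ Y), and suppose M₁ forces the variables of Y ∩ nvar(M₁) to be unallocated in h' and M₁ contains |h| ≥ min₁, M₂ contains |h| ≥ min₂. Let q be the number of distinct locations in s(Y ∩ nvar(M₁)). Then |dom(h)| ≤ |U| − min₁ − q and |U| ≥ min₂ + q. -/

import Mathlib

/-- Domain of a heap: locations where the heap is defined. -/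
def hdom {U : Type*} {k : ℕ} (h : U → Option (Fin k → U)) : Set U := {u | (h u).isSome}

/-- Two heaps are disjoint iff their domains are disjoint. -/
def hdisj {U : Type*} {k : ℕ} (h₁ h₂ : U → Option (Fin k → U)) : Prop :=
  ∀ u, h₁ u = none ∨ h₂ u = none

/-- finite-universe septraction constraint.  Let `h'` be the
witness heap (disjoint from `h`), `Y` a set of variables unallocated in `h`,
`N = nvar(M₁)` a set of variables unallocated in `h'`, `min₁ ≤ |dom(h')|`
and `min₂ ≤ |dom(h)| + |dom(h')| = |dom(h ⊎ h')|`.  With `q` the number of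
distinct locations in `s(Y ∩ N)`, we get `|dom(h)| ≤ |U| − min₁ − q` and
`|U| ≥ min₂ + q`. -/
theorem stmt15 {U Var : Type*} [Fintype U] [Nonempty U] [DecidableEq U]
    [DecidableEq Var] {k : ℕ} (hk : 1 ≤ k) (s : Var → U)
    (h h' : U → Option (Fin k → U)) (hd : hdisj h h')
    (Y N : Finset Var) (min₁ min₂ : ℕ)
    (hY : ∀ y ∈ Y, s y ∉ hdom h)
    (hN : ∀ y ∈ N, s y ∉ hdom h')
    (hmin₁ : min₁ ≤ (hdom h').ncard)
    (hmin₂ : min₂ ≤ (hdom h).ncard + (hdom h').ncard) :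
    (((hdom h).ncard : ℤ) ≤
        (Fintype.card U : ℤ) - (min₁ : ℤ) - (((Y ∩ N).image s).card : ℤ)) ∧
    ((min₂ : ℤ) + (((Y ∩ N).image s).card : ℤ) ≤ (Fintype.card U : ℤ)) := by
  have d1 : Disjoint (hdom h) (hdom h') := by
    rw [Set.disjoint_left]
    intro u h1 h2
    simp only [hdom, Set.mem_setOf_eq] at h1 h2
    rcases hd u with e | e
    · simp [e] at h1
    · simp [e] at h2
  have d2 : Disjoint (hdom h ∪ hdom h') (((Y ∩ N).image s : Finset U) : Set U) := by
    rw [Set.disjoint_right]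
    intro u hu hu'
    simp only [Finset.coe_image, Set.mem_image, Finset.mem_coe, Finset.mem_inter] at hu
    obtain ⟨y, ⟨hy, hn⟩, rfl⟩ := hu
    rcases hu' with e | e
    · exact hY y hy e
    · exact hN y hn e
  have e1 := Set.ncard_union_eq d1 (Set.toFinite _) (Set.toFinite _)
  have e2 := Set.ncard_union_eq d2 (Set.toFinite _) (Set.toFinite _)
  rw [Set.ncard_coe_finset] at e2
  have e3 := Set.ncard_le_card (hdom h ∪ hdom h' ∪ (((Y ∩ N).image s : Finset U) : Set U))
  rw [Nat.card_eq_fintype_card] at e3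
  constructor <;> omega
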